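/- Let P be a symmetric positive semidefinite N×N matrix and define, for γ ∈ ℝ^N with γ > 0 componentwise, G(γ) ∈ ℝ^N by G(γ)ᵢ := 1/[(P + Diag(γ))⁻¹]ᵢᵢ − γᵢ. Then: (a) G(γ) ≤ diag(P) componentwise for all γ > 0 (in particular G is bounded above); and (b) for any fixed γ₀ > 0, limPᵢtᵢ→∞ G(t γ₀) = diag(P), i.e., G(tγ₀) converges componentwise to the diagonal of P as t → ∞. -/

import Mathlib

/-!
Write `M = P + Diag γ`, which is positive definite, and `K = M⁻¹`.

The upper bound is the inequality `1 / Mᵢᵢ ≤ Kᵢᵢ`, obtained by evaluating the quadratic form of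
`M` at `K eᵢ - Mᵢᵢ⁻¹ eᵢ` (`inv_diag_le_diag_inv`).

For the limit, the `(i, i)` entry of `M K = 1` reads `(P K)ᵢᵢ + γᵢ Kᵢᵢ = 1`, so
`G(γ)ᵢ = (P K)ᵢᵢ / Kᵢᵢ`, and this ratio is unchanged when `K` is replaced by the adjugate of `M`
or of any nonzero multiple of `M` (`gecG_eq_adjugate`). With `γ = t γ₀` and the multiple
`t⁻¹ M = t⁻¹ P + Diag γ₀`, the ratio is a continuous function of `t⁻¹` near `0`, where its value
is `(P Diag d)ᵢᵢ / dᵢ = Pᵢᵢ` for `Diag d = adj (Diag γ₀)`.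
-/

open Matrix Filter

/-- The GEC second-order update map `G(γ)ᵢ = 1/[(P + Diag γ)⁻¹]ᵢᵢ − γᵢ`. -/
noncomputable def gecG {N : ℕ} (P : Matrix (Fin N) (Fin N) ℝ) (γ : Fin N → ℝ) :
    Fin N → ℝ :=
  fun i => (((P + Matrix.diagonal γ)⁻¹ : Matrix (Fin N) (Fin N) ℝ) i i)⁻¹ - γ i

lemma posDef_add_diagonal {N : ℕ} {P : Matrix (Fin N) (Fin N) ℝ} (hP : P.PosSemidef)
    {γ : Fin N → ℝ} (hγ : ∀ n, 0 < γ n) : (P + Matrix.diagonal γ).PosDef :=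
  Matrix.PosDef.posSemidef_add hP (Matrix.PosDef.diagonal hγ)

lemma inv_diag_le_diag_inv {N : ℕ} {M : Matrix (Fin N) (Fin N) ℝ} (hM : M.PosDef) (i : Fin N) :
    (M i i)⁻¹ ≤ M⁻¹ i i := by
  have hMi : 0 < M i i := hM.diag_pos
  have hdet : IsUnit M.det := (Matrix.isUnit_iff_isUnit_det M).1 hM.isUnit
  set s := (M i i)⁻¹ with hs
  set e : Fin N → ℝ := Pi.single i 1 with he
  have hq := hM.posSemidef.dotProduct_mulVec_nonneg (M⁻¹ *ᵥ e - s • e)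
  have hMK : M *ᵥ (M⁻¹ *ᵥ e) = e := by
    rw [Matrix.mulVec_mulVec, Matrix.mul_nonsing_inv _ hdet, Matrix.one_mulVec]
  have hsym : Mᵀ = M := by simpa using hM.isHermitian.eq
  have hcross : (M⁻¹ *ᵥ e) ⬝ᵥ (M *ᵥ e) = 1 := by
    rw [Matrix.dotProduct_mulVec, ← Matrix.mulVec_transpose, hsym, hMK]
    simp [he]
  have hKe : (M⁻¹ *ᵥ e) ⬝ᵥ e = M⁻¹ i i := by simp [he]
  have hMe : e ⬝ᵥ (M *ᵥ e) = M i i := by simp [he]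
  have hee : e ⬝ᵥ e = 1 := by simp [he]
  rw [star_trivial, Matrix.mulVec_sub, Matrix.mulVec_smul, hMK] at hq
  simp only [sub_dotProduct, dotProduct_sub, smul_dotProduct, dotProduct_smul, hcross, hKe, hMe,
    hee, smul_eq_mul] at hq
  have h1 : s * M i i = 1 := inv_mul_cancel₀ hMi.ne'
  rw [h1] at hq
  linarith

/-- The update as a ratio of adjugate entries; rescaling `M = P + Diag γ` by `c ≠ 0` multiplies
its adjugate by a power of `c`, which cancels. -/
lemma gecG_eq_adjugate {N : ℕ} {P : Matrix (Fin N) (Fin N) ℝ} (hP : P.PosSemidef)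
    {γ : Fin N → ℝ} (hγ : ∀ n, 0 < γ n) {c : ℝ} (hc : c ≠ 0) (i : Fin N) :
    gecG P γ i = (P * (c • (P + Matrix.diagonal γ)).adjugate) i i /
      (c • (P + Matrix.diagonal γ)).adjugate i i := by
  have hM := posDef_add_diagonal hP hγ
  set M := P + Matrix.diagonal γ with hMdef
  have hdet : IsUnit M.det := (Matrix.isUnit_iff_isUnit_det M).1 hM.isUnit
  have hK : 0 < M⁻¹ i i := hM.inv.diag_pos
  have hone : (P * M⁻¹) i i + γ i * M⁻¹ i i = 1 := by
    have h := congrFun (congrFun (Matrix.mul_nonsing_inv M hdet) i) i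
    nth_rewrite 1 [hMdef] at h
    simpa [Matrix.add_mul, Matrix.diagonal_mul] using h
  have hadj : M.adjugate = M.det • M⁻¹ := by
    rw [Matrix.inv_def, smul_smul, Ring.mul_inverse_cancel _ hdet, one_smul]
  have hpow : c ^ (Fintype.card (Fin N) - 1) * M.det ≠ 0 :=
    mul_ne_zero (pow_ne_zero _ hc) hdet.ne_zero
  rw [Matrix.adjugate_smul, hadj, smul_smul, Matrix.mul_smul, Matrix.smul_apply,
    Matrix.smul_apply, smul_eq_mul, smul_eq_mul, mul_div_mul_left _ _ hpow, eq_div_iff hK.ne']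
  change ((M⁻¹ i i)⁻¹ - γ i) * M⁻¹ i i = _
  rw [sub_mul, inv_mul_cancel₀ hK.ne']
  linarith

/-- **Boundedness of the GEC second-order update map (property (iv) in the
proof of Theorem 5(b)).**  Let `P` be symmetric positive semidefinite.  Then:
(a) `G(γ) ≤ diag(P)` componentwise for all `γ > 0`; and
(b) for any fixed `γ₀ > 0`, `G(t γ₀) → diag(P)` componentwise as `t → ∞`. -/
theorem gecG_bounded
    (N : ℕ)
    (P : Matrix (Fin N) (Fin N) ℝ) (hP : P.PosSemidef) :
    (∀ γ : Fin N → ℝ, (∀ n, 0 < γ n) → ∀ i, gecG P γ i ≤ P i i) ∧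
    (∀ γ₀ : Fin N → ℝ, (∀ n, 0 < γ₀ n) →
      ∀ i, Tendsto (fun t : ℝ => gecG P (t • γ₀) i) atTop (nhds (P i i))) := by
  refine ⟨fun γ hγ i => ?_, fun γ₀ hγ₀ i => ?_⟩
  · have hM := posDef_add_diagonal hP hγ
    have h := inv_le_of_inv_le₀ hM.diag_pos (inv_diag_le_diag_inv hM i)
    rw [Matrix.add_apply, Matrix.diagonal_apply_eq] at h
    exact sub_le_iff_le_add.2 h
  · set A : ℝ → Matrix (Fin N) (Fin N) ℝ :=
      fun ε => (ε • P + Matrix.diagonal γ₀).adjugate with hA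
    have hAc : Continuous A := by
      have : Continuous fun ε : ℝ => ε • P + Matrix.diagonal γ₀ := by fun_prop
      exact this.matrix_adjugate
    have hA0 : A 0 = Matrix.diagonal fun j => ∏ k ∈ Finset.univ.erase j, γ₀ k := by
      simp [hA, Matrix.adjugate_diagonal]
    have hd : (∏ k ∈ Finset.univ.erase i, γ₀ k) ≠ 0 :=
      Finset.prod_ne_zero_iff.2 fun k _ => (hγ₀ k).ne'
    have hcont : ContinuousAt (fun ε => (P * A ε) i i / A ε i i) 0 := by
      refine ContinuousAt.div ?_ ?_ ?_
      · exact ((continuous_const.matrix_mul hAc).matrix_elem i i).continuousAt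
      · exact (hAc.matrix_elem i i).continuousAt
      · simpa [hA0] using hd
    have hlim : Tendsto (fun t : ℝ => (P * A t⁻¹) i i / A t⁻¹ i i) atTop (nhds (P i i)) := by
      have h := hcont.tendsto.comp (tendsto_inv_atTop_zero (𝕜 := ℝ))
      rw [hA0, Matrix.mul_diagonal, Matrix.diagonal_apply_eq, mul_div_cancel_right₀ _ hd] at h
      exact h
    refine hlim.congr' ?_
    filter_upwards [eventually_gt_atTop 0] with t ht
    have hscale : t⁻¹ • (P + Matrix.diagonal (t • γ₀)) = t⁻¹ • P + Matrix.diagonal γ₀ := by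
      rw [smul_add, ← Matrix.diagonal_smul, smul_smul, inv_mul_cancel₀ ht.ne', one_smul]
    rw [gecG_eq_adjugate hP (γ := t • γ₀) (fun n => mul_pos ht (hγ₀ n)) (inv_ne_zero ht.ne') i, hscale]
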